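/- For every y_0 > 0 there exists a constant c = c(y_0) > 0, independent of t ∈ [0,1] and α ∈ (0,1), such that 𝓕_{t,α}'(y) ≥ c for all y ∈ [y_0, 1/α − 1); and for every y_0 ∈ (−1, 0) there exists c = c(y_0) > 0, independent of t and α, such that 𝓕_{t,α}'(y) ≤ −c for all y ∈ (−1, y_0]. -/

import Mathlib

open Set Filter

noncomputable def GP : ℝ → ℝ := fun x => x * Real.log x + (1 - x) * Real.log (1 - x)

noncomputable def Gt (f0 f1 : ℝ → ℝ) (t : ℝ) : ℝ → ℝ :=
  fun x => GP x + ((1 - t) * f0 x + t * f1 x)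

noncomputable def Phase (G : ℝ → ℝ) (α : ℝ) : ℝ → ℝ :=
  fun x => (x - α) * deriv G x - (G x - G α)

noncomputable def Qnorm (G : ℝ → ℝ) (N : ℕ) (α : ℝ) : ℝ :=
  2 * Real.pi * ∫ x in (0:ℝ)..1, Real.exp (-(N : ℝ) * Phase G α x)

noncomputable def RPhase (G : ℝ → ℝ) (α : ℝ) : ℝ → ℝ :=
  fun y => (1 / α) * Phase G α (α * (1 + y))

noncomputable def Leg (G : ℝ → ℝ) (S : Set ℝ) : ℝ → ℝ :=
  fun ρ => sSup ((fun x => x * ρ - G x) '' S)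

noncomputable def QQ (G : ℝ → ℝ) (N : ℕ) (α : ℝ) : ℝ :=
  Qnorm G N α * Real.exp ((N : ℝ) * G α)

/-!
Differentiating the phase cancels the `G'` terms and leaves `F' x = (x - α) * G'' x`, so with
`x = α * (1 + y)` the rescaled phase has derivative `y / (1 + y) * (x * G'' x)`. The first factor
is increasing on `(-1, ∞)` and vanishes only at `0`, so everything reduces to a positive lower
bound for `x * G'' x` on `(0, 1)`, uniform in `t`. For `G = GP + f`, the function
`x * (1 - x) * G'' x = 1 + x * (1 - x) * f'' x` extends continuously to `[0, 1]` with value `1` at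
both ends, hence has a positive minimum there. Since `G_t''` is a convex combination of `G_0''`
and `G_1''`, the smaller of the two minima serves for every `t`.
-/

section Phase

variable {G : ℝ → ℝ} {α m x y y₀ : ℝ}

lemma hasDerivAt_Phase (hG : DifferentiableAt ℝ G x) (hG' : DifferentiableAt ℝ (deriv G) x) :
    HasDerivAt (Phase G α) ((x - α) * iteratedDeriv 2 G x) x := by
  have h := (((hasDerivAt_id x).sub_const α).mul hG'.hasDerivAt).sub (hG.hasDerivAt.sub_const (G α))
  refine h.congr_deriv ?_
  rw [iteratedDeriv_succ, iteratedDeriv_one, id]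
  ring

lemma deriv_RPhase (hα : α ≠ 0) (hy : 1 + y ≠ 0) (hG : DifferentiableAt ℝ G (α * (1 + y)))
    (hG' : DifferentiableAt ℝ (deriv G) (α * (1 + y))) :
    deriv (RPhase G α) y =
      y / (1 + y) * (α * (1 + y) * iteratedDeriv 2 G (α * (1 + y))) := by
  have hscale : HasDerivAt (fun y ↦ α * (1 + y)) α y := by
    simpa using ((hasDerivAt_id y).const_add 1).const_mul α
  have h : HasDerivAt (RPhase G α) _ y :=
    ((hasDerivAt_Phase hG hG').comp y hscale).const_mul (1 / α)
  rw [h.deriv]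
  field_simp
  ring

lemma monotoneOn_div_one_add : MonotoneOn (fun y : ℝ ↦ y / (1 + y)) (Ioi (-1)) := by
  intro a ha b hb hab
  rw [mem_Ioi] at ha hb
  rw [div_le_div_iff₀ (by linarith) (by linarith)]
  linarith

lemma div_one_add_mul_le_deriv_RPhase (hα : α ≠ 0) (hG : DifferentiableAt ℝ G (α * (1 + y)))
    (hG' : DifferentiableAt ℝ (deriv G) (α * (1 + y))) (hm : 0 ≤ m)
    (hmG : m ≤ α * (1 + y) * iteratedDeriv 2 G (α * (1 + y))) (hy₀ : 0 ≤ y₀) (hy : y₀ ≤ y) :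
    y₀ / (1 + y₀) * m ≤ deriv (RPhase G α) y := by
  have hmono : y₀ / (1 + y₀) ≤ y / (1 + y) :=
    monotoneOn_div_one_add (by grind) (by grind) hy
  rw [deriv_RPhase hα (by linarith) hG hG']
  exact mul_le_mul hmono hmG hm ((by positivity : 0 ≤ y₀ / (1 + y₀)).trans hmono)

lemma deriv_RPhase_le_div_one_add_mul (hα : α ≠ 0) (hG : DifferentiableAt ℝ G (α * (1 + y)))
    (hG' : DifferentiableAt ℝ (deriv G) (α * (1 + y))) (hm : 0 ≤ m)
    (hmG : m ≤ α * (1 + y) * iteratedDeriv 2 G (α * (1 + y)))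
    (hy' : -1 < y) (hy : y ≤ y₀) (hy₀ : y₀ ≤ 0) :
    deriv (RPhase G α) y ≤ y₀ / (1 + y₀) * m := by
  have hmono : y / (1 + y) ≤ y₀ / (1 + y₀) :=
    monotoneOn_div_one_add (by grind) (by grind) hy
  have hneg : y / (1 + y) ≤ 0 :=
    div_nonpos_of_nonpos_of_nonneg (hy.trans hy₀) (by linarith)
  rw [deriv_RPhase hα (by linarith) hG hG']
  exact (mul_le_mul_of_nonpos_left hmG hneg).trans (mul_le_mul_of_nonneg_right hmono hm)

lemma mul_one_add_mem_Ioo (hα : 0 < α) (hy : -1 < y) (hy' : y < 1 / α - 1) :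
    α * (1 + y) ∈ Ioo 0 1 := by
  refine ⟨mul_pos hα (by linarith), ?_⟩
  rw [mul_comm, ← lt_div_iff₀ hα]
  linarith

end Phase

section Potential

variable {f f0 f1 : ℝ → ℝ} {t x : ℝ}

lemma GP_eq_neg_binEntropy : GP = -Real.binEntropy := by
  ext x
  simp only [GP, Pi.neg_apply, Real.binEntropy, Real.log_inv]
  ring

lemma iteratedDeriv_two_GP (x : ℝ) : iteratedDeriv 2 GP x = 1 / (x * (1 - x)) := by
  rw [GP_eq_neg_binEntropy, iteratedDeriv_neg, iteratedDeriv_eq_iterate, Real.deriv2_binEntropy]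
  ring

lemma contDiffAt_GP {n : WithTop ℕ∞} (hx₀ : x ≠ 0) (hx₁ : x ≠ 1) : ContDiffAt ℝ n GP x := by
  have : 1 - x ≠ 0 := sub_ne_zero.2 hx₁.symm
  unfold GP
  fun_prop (disch := assumption)

lemma mul_one_sub_mul_iteratedDeriv_two_GP_add (hx₀ : x ≠ 0) (hx₁ : x ≠ 1)
    (hf : ContDiffAt ℝ 2 f x) :
    x * (1 - x) * iteratedDeriv 2 (GP + f) x = 1 + x * (1 - x) * iteratedDeriv 2 f x := by
  have : 1 - x ≠ 0 := sub_ne_zero.2 hx₁.symm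
  rw [iteratedDeriv_add (contDiffAt_GP hx₀ hx₁) hf, iteratedDeriv_two_GP]
  field_simp

lemma exists_pos_forall_le_mul_iteratedDeriv_two_GP_add (hf : ContDiffOn ℝ 2 f (Icc 0 1))
    (hG : ∀ x ∈ Ioo (0 : ℝ) 1, 0 < iteratedDeriv 2 (GP + f) x) :
    ∃ m > 0, ∀ x ∈ Ioo (0 : ℝ) 1, m ≤ x * iteratedDeriv 2 (GP + f) x := by
  set w : ℝ → ℝ := fun x ↦ 1 + x * (1 - x) * iteratedDerivWithin 2 f (Icc 0 1) x with hw
  have huniq : UniqueDiffOn ℝ (Icc (0 : ℝ) 1) := uniqueDiffOn_Icc_zero_one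
  have hw_cont : ContinuousOn w (Icc 0 1) := by
    have := hf.continuousOn_iteratedDerivWithin le_rfl huniq
    fun_prop
  have hw_eq : ∀ x ∈ Ioo (0 : ℝ) 1, w x = x * (1 - x) * iteratedDeriv 2 (GP + f) x := by
    intro x hx
    have hfx : ContDiffAt ℝ 2 f x := hf.contDiffAt (Icc_mem_nhds hx.1 hx.2)
    rw [mul_one_sub_mul_iteratedDeriv_two_GP_add hx.1.ne' hx.2.ne hfx,
      ← iteratedDerivWithin_eq_iteratedDeriv huniq hfx (Ioo_subset_Icc_self hx)]
  have hw_pos : ∀ x ∈ Icc (0 : ℝ) 1, 0 < w x := by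
    intro x hx
    rcases eq_endpoints_or_mem_Ioo_of_mem_Icc hx with rfl | rfl | hx
    · simp [hw]
    · simp [hw]
    · rw [hw_eq x hx]
      exact mul_pos (mul_pos hx.1 (sub_pos.2 hx.2)) (hG x hx)
  obtain ⟨z, hz, hmin⟩ := isCompact_Icc.exists_isMinOn (nonempty_Icc.2 zero_le_one) hw_cont
  refine ⟨w z, hw_pos z hz, fun x hx ↦ ?_⟩
  calc w z ≤ w x := hmin (Ioo_subset_Icc_self hx)
    _ = (1 - x) * (x * iteratedDeriv 2 (GP + f) x) := by rw [hw_eq x hx]; ring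
    _ ≤ x * iteratedDeriv 2 (GP + f) x :=
      mul_le_of_le_one_left (mul_pos hx.1 (hG x hx)).le (by linarith [hx.1])

lemma Gt_zero : Gt f0 f1 0 = GP + f0 := by
  ext x
  simp [Gt]

lemma Gt_one : Gt f0 f1 1 = GP + f1 := by
  ext x
  simp [Gt]

lemma Gt_eq_smul_add_smul (t : ℝ) : Gt f0 f1 t = (1 - t) • (GP + f0) + t • (GP + f1) := by
  ext x
  simp only [Gt, Pi.add_apply, Pi.smul_apply, smul_eq_mul]
  ring

lemma contDiffAt_Gt {n : WithTop ℕ∞} (hx₀ : x ≠ 0) (hx₁ : x ≠ 1)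
    (hf0 : ContDiffAt ℝ n f0 x) (hf1 : ContDiffAt ℝ n f1 x) : ContDiffAt ℝ n (Gt f0 f1 t) x := by
  have hGP : ContDiffAt ℝ n GP x := contDiffAt_GP hx₀ hx₁
  unfold Gt
  fun_prop

lemma iteratedDeriv_Gt {n : ℕ} (hx₀ : x ≠ 0) (hx₁ : x ≠ 1)
    (hf0 : ContDiffAt ℝ n f0 x) (hf1 : ContDiffAt ℝ n f1 x) :
    iteratedDeriv n (Gt f0 f1 t) x =
      (1 - t) * iteratedDeriv n (GP + f0) x + t * iteratedDeriv n (GP + f1) x := by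
  have hGP : ContDiffAt ℝ n GP x := contDiffAt_GP hx₀ hx₁
  have h0 : ContDiffAt ℝ n ((1 - t) • (GP + f0)) x := (hGP.add hf0).const_smul (1 - t)
  have h1 : ContDiffAt ℝ n (t • (GP + f1)) x := (hGP.add hf1).const_smul t
  rw [Gt_eq_smul_add_smul, iteratedDeriv_add h0 h1, iteratedDeriv_const_smul_field,
    iteratedDeriv_const_smul_field, smul_eq_mul, smul_eq_mul]

lemma exists_pos_forall_le_mul_iteratedDeriv_two_Gt
    (hf0 : ContDiffOn ℝ 2 f0 (Icc 0 1)) (hf1 : ContDiffOn ℝ 2 f1 (Icc 0 1))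
    (hG0 : ∀ x ∈ Ioo (0 : ℝ) 1, 0 < iteratedDeriv 2 (Gt f0 f1 0) x)
    (hG1 : ∀ x ∈ Ioo (0 : ℝ) 1, 0 < iteratedDeriv 2 (Gt f0 f1 1) x) :
    ∃ m > 0, ∀ t ∈ Icc (0 : ℝ) 1, ∀ x ∈ Ioo (0 : ℝ) 1,
      m ≤ x * iteratedDeriv 2 (Gt f0 f1 t) x := by
  rw [Gt_zero] at hG0
  rw [Gt_one] at hG1
  obtain ⟨m0, hm0, hle0⟩ := exists_pos_forall_le_mul_iteratedDeriv_two_GP_add hf0 hG0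
  obtain ⟨m1, hm1, hle1⟩ := exists_pos_forall_le_mul_iteratedDeriv_two_GP_add hf1 hG1
  refine ⟨min m0 m1, lt_min hm0 hm1, fun t ht x hx ↦ ?_⟩
  have hnhds : Icc 0 1 ∈ nhds x := Icc_mem_nhds hx.1 hx.2
  have ht' : 0 ≤ 1 - t := sub_nonneg.2 ht.2
  calc min m0 m1 ≤ (1 - t) * m0 + t * m1 :=
      Convex.min_le_combo m0 m1 ht' ht.1 (sub_add_cancel 1 t)
    _ ≤ (1 - t) * (x * iteratedDeriv 2 (GP + f0) x) + t * (x * iteratedDeriv 2 (GP + f1) x) :=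
      add_le_add (mul_le_mul_of_nonneg_left (hle0 x hx) ht')
        (mul_le_mul_of_nonneg_left (hle1 x hx) ht.1)
    _ = x * iteratedDeriv 2 (Gt f0 f1 t) x := by
      rw [iteratedDeriv_Gt hx.1.ne' hx.2.ne (hf0.contDiffAt hnhds) (hf1.contDiffAt hnhds)]
      ring

end Potential

theorem bergman_cp1_rescaled_phase_uniform_derivative_bounds_general
    (f0 f1 : ℝ → ℝ) (hf0 : ContDiffOn ℝ 2 f0 (Icc 0 1)) (hf1 : ContDiffOn ℝ 2 f1 (Icc 0 1))
    (hG0 : ∀ x ∈ Ioo (0 : ℝ) 1, 0 < iteratedDeriv 2 (Gt f0 f1 0) x)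
    (hG1 : ∀ x ∈ Ioo (0 : ℝ) 1, 0 < iteratedDeriv 2 (Gt f0 f1 1) x) :
    (∀ y₀ : ℝ, 0 < y₀ → ∃ c : ℝ, 0 < c ∧
      ∀ t ∈ Icc (0 : ℝ) 1, ∀ α ∈ Ioo (0 : ℝ) 1, ∀ y : ℝ,
        y₀ ≤ y → y < 1 / α - 1 → c ≤ deriv (RPhase (Gt f0 f1 t) α) y) ∧
    (∀ y₀ : ℝ, -1 < y₀ → y₀ < 0 → ∃ c : ℝ, 0 < c ∧
      ∀ t ∈ Icc (0 : ℝ) 1, ∀ α ∈ Ioo (0 : ℝ) 1, ∀ y : ℝ,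
        -1 < y → y ≤ y₀ → deriv (RPhase (Gt f0 f1 t) α) y ≤ -c) := by
  obtain ⟨m, hm, hmG⟩ := exists_pos_forall_le_mul_iteratedDeriv_two_Gt hf0 hf1 hG0 hG1
  have hC2 : ∀ t, ∀ x ∈ Ioo (0 : ℝ) 1, ContDiffAt ℝ 2 (Gt f0 f1 t) x := fun t x hx ↦
    have hnhds := Icc_mem_nhds hx.1 hx.2
    contDiffAt_Gt hx.1.ne' hx.2.ne (hf0.contDiffAt hnhds) (hf1.contDiffAt hnhds)
  have hdiff : ∀ t, ∀ x ∈ Ioo (0 : ℝ) 1, DifferentiableAt ℝ (Gt f0 f1 t) x := fun t x hx ↦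
    (hC2 t x hx).differentiableAt two_ne_zero
  have hdiff' : ∀ t, ∀ x ∈ Ioo (0 : ℝ) 1, DifferentiableAt ℝ (deriv (Gt f0 f1 t)) x :=
    fun t x hx ↦ ((hC2 t x hx).derivWithin one_add_one_eq_two.le).differentiableAt one_ne_zero
  constructor
  · intro y₀ hy₀
    refine ⟨y₀ / (1 + y₀) * m, by positivity, fun t ht α hα y hy hy' ↦ ?_⟩
    have hx := mul_one_add_mem_Ioo hα.1 (by linarith) hy'
    exact div_one_add_mul_le_deriv_RPhase hα.1.ne' (hdiff t _ hx) (hdiff' t _ hx) hm.le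
      (hmG t ht _ hx) hy₀.le hy
  · intro y₀ hy₀' hy₀
    have hneg : y₀ / (1 + y₀) < 0 := div_neg_of_neg_of_pos hy₀ (by linarith)
    refine ⟨-(y₀ / (1 + y₀) * m), neg_pos.2 (mul_neg_of_neg_of_pos hneg hm),
      fun t ht α hα y hy' hy ↦ ?_⟩
    have hα' : 1 < 1 / α := one_lt_one_div hα.1 hα.2
    have hx := mul_one_add_mem_Ioo hα.1 hy' (by linarith)
    rw [neg_neg]
    exact deriv_RPhase_le_div_one_add_mul hα.1.ne' (hdiff t _ hx) (hdiff' t _ hx) hm.le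
      (hmG t ht _ hx) hy' hy hy₀.le

theorem bergman_cp1_rescaled_phase_uniform_derivative_bounds
    (f0 f1 : ℝ → ℝ) (hf0 : ContDiff ℝ (⊤ : ℕ∞) f0) (hf1 : ContDiff ℝ (⊤ : ℕ∞) f1)
    (hG0 : ∀ x ∈ Set.Ioo (0:ℝ) 1, 0 < iteratedDeriv 2 (Gt f0 f1 0) x)
    (hG1 : ∀ x ∈ Set.Ioo (0:ℝ) 1, 0 < iteratedDeriv 2 (Gt f0 f1 1) x) :
    (∀ y₀ : ℝ, 0 < y₀ → ∃ c : ℝ, 0 < c ∧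
      ∀ t ∈ Set.Icc (0:ℝ) 1, ∀ α ∈ Set.Ioo (0:ℝ) 1, ∀ y : ℝ,
        y₀ ≤ y → y < 1 / α - 1 → c ≤ deriv (RPhase (Gt f0 f1 t) α) y) ∧
    (∀ y₀ : ℝ, -1 < y₀ → y₀ < 0 → ∃ c : ℝ, 0 < c ∧
      ∀ t ∈ Set.Icc (0:ℝ) 1, ∀ α ∈ Set.Ioo (0:ℝ) 1, ∀ y : ℝ,
        -1 < y → y ≤ y₀ → deriv (RPhase (Gt f0 f1 t) α) y ≤ -c) :=
  bergman_cp1_rescaled_phase_uniform_derivative_bounds_general f0 f1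
    (contDiff_infty.1 hf0 2).contDiffOn (contDiff_infty.1 hf1 2).contDiffOn hG0 hG1
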